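/- Let 𝔤 = ℝ·id_{ℝ^{1,n+1}} ⊕ 𝔤^{4,𝔥,m,ψ} ⊆ co(1,n+1)_{ℝp}, where, for a fixed orthogonal decomposition ℝⁿ = ℝᵐ ⊕ ℝ^{n−m} with 0 < n−m, a subalgebra 𝔥 ⊆ so(m) with dim z(𝔥) ≥ n−m, and a surjective linear map ψ : 𝔥 → ℝ^{n−m} with ψ|_{[𝔥,𝔥]} = 0, one sets 𝔤^{4,𝔥,m,ψ} := {(0, A, X + ψ(A)) : A ∈ 𝔥, X ∈ ℝᵐ}. Then L(ℛ(𝔤)) ⊆ so(1,n+1); consequently 𝔤 is not a Berger algebra, and more generally no subalgebra 𝔤' ⊆ co(1,n+1)_{ℝp} with 𝔤' ⊄ so(1,n+1) and pr_{so(1,n+1)}𝔤' = 𝔤^{4,𝔥,m,ψ} is a Berger algebra. -/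

import Mathlib

open Module

noncomputable section

namespace Weyl

variable {V : Type*} [AddCommGroup V] [Module ℝ V]

/-- The endomorphism `X ∧ Y : Z ↦ B(X,Z)•Y − B(Y,Z)•X`. -/
def wedge (B : LinearMap.BilinForm ℝ V) (X Y : V) : Module.End ℝ V where
  toFun Z := B X Z • Y - B Y Z • X
  map_add' z z' := by simp only [map_add, add_smul]; abel
  map_smul' c z := by simp only [map_smul, smul_eq_mul, RingHom.id_apply, mul_smul, smul_sub]

/-- The Lie algebra `so(B)` of endomorphisms skew-symmetric with respect to `B`. -/
def soSet (B : LinearMap.BilinForm ℝ V) : Set (Module.End ℝ V) :=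
  {A | ∀ x y, B (A x) y + B x (A y) = 0}

/-- The conformal Lie algebra `co(B) = ℝ·id ⊕ so(B)`. -/
def coSet (B : LinearMap.BilinForm ℝ V) : Set (Module.End ℝ V) :=
  {F | ∃ c : ℝ, ∃ S ∈ soSet B, F = c • (1 : Module.End ℝ V) + S}

/-- The first prolongation `g^{(1)}` of a set of endomorphisms:
linear maps `φ : V → g` with `φ(X)Y = φ(Y)X`. -/
def firstProlong (g : Set (Module.End ℝ V)) : Set (V →ₗ[ℝ] Module.End ℝ V) :=
  {φ | (∀ x, φ x ∈ g) ∧ ∀ x y, φ x y = φ y x}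

/-- `R` is an algebraic curvature tensor of type `g` (a linear map on `Λ²V`,
encoded as an antisymmetric bilinear map, with values in `g`, satisfying the
Bianchi identity). -/
def IsCurv (g : Set (Module.End ℝ V)) (R : V →ₗ[ℝ] V →ₗ[ℝ] Module.End ℝ V) : Prop :=
  (∀ x y, R x y = - R y x) ∧ (∀ x y, R x y ∈ g) ∧
    ∀ x y z, R x y z + R y z x + R z x y = 0

/-- `L(ℛ(g))`: the span of all values of algebraic curvature tensors of type `g`. -/
def curvSpan (g : Set (Module.End ℝ V)) : Submodule ℝ (Module.End ℝ V) :=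
  Submodule.span ℝ {F | ∃ R, IsCurv g R ∧ ∃ x y, F = R x y}

/-- `g` is a Berger algebra: `L(ℛ(g)) = g`. -/
def IsBerger (g : Set (Module.End ℝ V)) : Prop :=
  (curvSpan g : Set (Module.End ℝ V)) = g

/-- `g` is (the underlying set of) a Lie subalgebra of `gl(V)`. -/
def IsLieSub (g : Set (Module.End ℝ V)) : Prop :=
  (0 : Module.End ℝ V) ∈ g ∧ (∀ F ∈ g, ∀ F' ∈ g, F + F' ∈ g) ∧
    (∀ (c : ℝ), ∀ F ∈ g, c • F ∈ g) ∧ ∀ F ∈ g, ∀ F' ∈ g, F * F' - F' * F ∈ g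

/-- The subspace `W` is invariant under every element of `g`. -/
def Invariant (g : Set (Module.End ℝ V)) (W : Submodule ℝ V) : Prop :=
  ∀ F ∈ g, ∀ x ∈ W, F x ∈ W

/-- The restriction of `B` to `W` is nondegenerate. -/
def IsNondegOn (B : LinearMap.BilinForm ℝ V) (W : Submodule ℝ V) : Prop :=
  ∀ x ∈ W, (∀ y ∈ W, B x y = 0) → x = 0

/-- Weak irreducibility: no proper nonzero invariant nondegenerate subspace. -/
def WeaklyIrred (B : LinearMap.BilinForm ℝ V) (g : Set (Module.End ℝ V)) : Prop :=
  ∀ W : Submodule ℝ V, Invariant g W → IsNondegOn B W → W = ⊥ ∨ W = ⊤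

/-- Irreducibility: no proper nonzero invariant subspace. -/
def Irred (g : Set (Module.End ℝ V)) : Prop :=
  ∀ W : Submodule ℝ V, Invariant g W → W = ⊥ ∨ W = ⊤

/-- The Euclidean dot product on `Fin n → ℝ`. -/
def dotE (n : ℕ) : LinearMap.BilinForm ℝ (Fin n → ℝ) :=
  LinearMap.mk₂ ℝ (fun x y => ∑ i, x i * y i)
    (fun x x' y => by simp [add_mul, Finset.sum_add_distrib])
    (fun c x y => by simp [Finset.mul_sum, mul_assoc])
    (fun x y y' => by simp [mul_add, Finset.sum_add_distrib])
    (fun c x y => by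
      simp only [Pi.smul_apply, smul_eq_mul, Finset.mul_sum]
      exact Finset.sum_congr rfl fun i _ => by ring)

/-- Minkowski space `ℝ^{1,n+1}` in Witt coordinates: the vector `(v, x, u)`
represents `v·p + x + u·q` with respect to a Witt basis `p, e₁, …, eₙ, q`. -/
abbrev Mink (n : ℕ) := ℝ × (Fin n → ℝ) × ℝ

/-- The Minkowski metric in Witt coordinates: `p, q` are isotropic, `(p,q) = 1`,
and the form is the Euclidean one on the `ℝⁿ`-part orthogonal to `p` and `q`. -/
def minkB (n : ℕ) : LinearMap.BilinForm ℝ (Mink n) :=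
  LinearMap.mk₂ ℝ (fun X Y => X.1 * Y.2.2 + X.2.2 * Y.1 + dotE n X.2.1 Y.2.1)
    (fun X X' Y => by
      simp only [Prod.fst_add, Prod.snd_add, Pi.add_apply, map_add,
        LinearMap.add_apply]
      ring)
    (fun c X Y => by
      simp only [Prod.smul_fst, Prod.smul_snd, smul_eq_mul, map_smul,
        LinearMap.smul_apply]
      ring)
    (fun X Y Y' => by
      simp only [Prod.fst_add, Prod.snd_add, Pi.add_apply, map_add,
        LinearMap.add_apply]
      ring)
    (fun c X Y => by
      simp only [Prod.smul_fst, Prod.smul_snd, smul_eq_mul, map_smul,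
        LinearMap.smul_apply]
      ring)

/-- The Witt basis vector `p`. -/
def pvec (n : ℕ) : Mink n := (1, 0, 0)

/-- The Witt basis vector `q`. -/
def qvec (n : ℕ) : Mink n := (0, 0, 1)

/-- The embedding of `ℝⁿ` into Minkowski space. -/
def emb {n : ℕ} (x : Fin n → ℝ) : Mink n := (0, x, 0)

/-- The element `(b, a, A, X) = b·id + (a, A, X)` of `co(1,n+1)_{ℝp}`:
it maps `p ↦ (a+b)·p`, `U ↦ (X,U)·p + A U + b·U` for `U ∈ ℝⁿ`, and
`q ↦ −X + (b−a)·q`. -/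
def coElem {n : ℕ} (b a : ℝ) (A : Module.End ℝ (Fin n → ℝ)) (X : Fin n → ℝ) :
    Module.End ℝ (Mink n) where
  toFun w := ((b + a) * w.1 + dotE n X w.2.1,
              b • w.2.1 + A w.2.1 - w.2.2 • X,
              (b - a) * w.2.2)
  map_add' w w' := by
    simp only [Prod.fst_add, Prod.snd_add, map_add, Prod.mk_add_mk, add_smul]
    refine Prod.ext (by ring) (Prod.ext ?_ (by ring))
    simp only [smul_add]
    abel
  map_smul' c w := by
    simp only [Prod.smul_fst, Prod.smul_snd, smul_eq_mul, map_smul,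
      RingHom.id_apply, Prod.smul_mk]
    refine Prod.ext (by simp; ring) (Prod.ext ?_ (by simp; ring))
    simp only [smul_smul, smul_sub, LinearMap.map_smul]
    rw [mul_comm]
    module

/-- The Lie algebra `so(n)` of skew-symmetric endomorphisms of Euclidean `ℝⁿ`. -/
def soE (n : ℕ) : Set (Module.End ℝ (Fin n → ℝ)) := soSet (dotE n)

/-- The subalgebra `co(1,n+1)_{ℝp}` of `co(1,n+1)` preserving the isotropic line `ℝp`,
whose elements are written `(b, a, A, X)`. -/
def coRp (n : ℕ) : Set (Module.End ℝ (Mink n)) :=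
  {F | ∃ b a : ℝ, ∃ A ∈ soE n, ∃ X : Fin n → ℝ, F = coElem b a A X}

/-- The subspace `ℝᵏ ⊆ ℝⁿ` spanned by the first `k` coordinates. -/
def Ek (n k : ℕ) : Submodule ℝ (Fin n → ℝ) where
  carrier := {x | ∀ i : Fin n, k ≤ (i : ℕ) → x i = 0}
  zero_mem' := fun i _ => rfl
  add_mem' := by
    intro a b ha hb i hi
    simp [ha i hi, hb i hi]
  smul_mem' := by
    intro c a ha i hi
    simp [ha i hi]

/-- The subspace `ℝ^{n−k} ⊆ ℝⁿ` spanned by the last `n − k` coordinates. -/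
def EkP (n k : ℕ) : Submodule ℝ (Fin n → ℝ) where
  carrier := {x | ∀ i : Fin n, (i : ℕ) < k → x i = 0}
  zero_mem' := fun i _ => rfl
  add_mem' := by
    intro a b ha hb i hi
    simp [ha i hi, hb i hi]
  smul_mem' := by
    intro c a ha i hi
    simp [ha i hi]

/-- `so(k)` regarded as a subalgebra of `so(n)`: skew endomorphisms preserving
`ℝᵏ` (the first `k` coordinates) and vanishing on `ℝ^{n−k}`. -/
def soOn (n k : ℕ) : Set (Module.End ℝ (Fin n → ℝ)) :=
  {A | A ∈ soE n ∧ (∀ x ∈ Ek n k, A x ∈ Ek n k) ∧ ∀ y ∈ EkP n k, A y = 0}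

/-- `so(n−k)` regarded as a subalgebra of `so(n)`: skew endomorphisms preserving
`ℝ^{n−k}` (the last `n − k` coordinates) and vanishing on `ℝᵏ`. -/
def soComp (n k : ℕ) : Set (Module.End ℝ (Fin n → ℝ)) :=
  {A | A ∈ soE n ∧ (∀ x ∈ EkP n k, A x ∈ EkP n k) ∧ ∀ y ∈ Ek n k, A y = 0}

/-- The projection `pr_{so(1,n+1)} g` of `g ⊆ co(1,n+1)` to `so(1,n+1)` along `ℝ·id`. -/
def prSO (n : ℕ) (g : Set (Module.End ℝ (Mink n))) : Set (Module.End ℝ (Mink n)) :=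
  {S | S ∈ soSet (minkB n) ∧ ∃ c : ℝ, c • (1 : Module.End ℝ (Mink n)) + S ∈ g}

/-!
Write `R(x, y) = (b, 0, A, X)(x, y)` for a curvature tensor `R` of type `ℝ·id ⊕ 𝔤^{4,𝔥,m,ψ}` and
fix `0 ≠ v ∈ ℝ^{n-m}`. The only property of the algebra that matters is that always `A v = 0`,
while `A = 0` forces `X ⊥ v`. By the Bianchi identity `b` is determined by `b(q, ·)`, and for
`U ∈ ℝⁿ` the maps `U ↦ A(p, U)` and `U ↦ A(U, v)` lie in the first prolongation of `so(n)`, which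
is zero; hence `X(p, v) ⊥ v` and `X(U, v) ⊥ v`. The first makes `b(q, p)` vanish, whereupon
`A(q, p)` is both symmetric and skew, so it is zero and `b(q, v) = (X(q, p), v) = 0`. Pairing the
Bianchi identity for `(U, v, q)` with `v` then gives `b(q, U) = 0`.
-/

section LinearAlgebra

variable {B : LinearMap.BilinForm ℝ V}

theorem soSet_eq_skewAdjointSubmodule (B : LinearMap.BilinForm ℝ V) :
    soSet B = B.skewAdjointSubmodule := by
  ext F
  simp only [soSet, Set.mem_ofPred_eq, SetLike.mem_coe, LinearMap.mem_skewAdjointSubmodule,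
    LinearMap.IsSkewAdjoint, LinearMap.IsAdjointPair, map_neg,
    eq_neg_iff_add_eq_zero, Pi.neg_apply]

theorem eq_zero_of_mem_soSet_of_symm (hB : B.SeparatingLeft) (hsymm : B.IsSymm)
    {F : Module.End ℝ V} (hF : F ∈ soSet B) (hF' : ∀ x y, B (F x) y = B (F y) x) : F = 0 := by
  refine LinearMap.ext fun x => hB _ fun y => ?_
  linarith [hF x y, hF' x y, hsymm.eq x (F y)]

theorem eq_zero_of_mem_firstProlong_soSet (hB : B.SeparatingLeft) (hsymm : B.IsSymm)
    {φ : V →ₗ[ℝ] Module.End ℝ V} (hφ : φ ∈ firstProlong (soSet B)) : φ = 0 := by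
  have skew : ∀ x y z, B (φ x y) z = -B (φ x z) y := fun x y z => by
    linarith [hφ.1 x y z, hsymm.eq y (φ x z)]
  refine LinearMap.ext fun x => LinearMap.ext fun y => hB _ fun z => self_eq_neg.mp ?_
  calc B (φ x y) z = -B (φ z x) y := by rw [skew, hφ.2 x z]
    _ = B (φ y z) x := by rw [skew, neg_neg, hφ.2 z y]
    _ = -B (φ x y) z := by rw [skew, hφ.2 y x]

theorem IsCurv.mono {g g' : Set (Module.End ℝ V)} (hg : g ⊆ g')
    {R : V →ₗ[ℝ] V →ₗ[ℝ] Module.End ℝ V} (hR : IsCurv g R) : IsCurv g' R :=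
  ⟨hR.1, fun x y => hg (hR.2.1 x y), hR.2.2⟩

theorem curvSpan_subset_soSet {g : Set (Module.End ℝ V)}
    (hg : ∀ R, IsCurv g R → ∀ x y, R x y ∈ soSet B) :
    (curvSpan g : Set (Module.End ℝ V)) ⊆ soSet B := by
  rw [soSet_eq_skewAdjointSubmodule] at hg ⊢
  refine Submodule.span_le.mpr ?_
  rintro _ ⟨R, hR, x, y, rfl⟩
  exact hg R hR x y

end LinearAlgebra

section Coordinates

variable {n : ℕ}

theorem dotE_apply (x y : Fin n → ℝ) : dotE n x y = x ⬝ᵥ y := rfl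

theorem dotE_isSymm : (dotE n).IsSymm := ⟨dotProduct_comm⟩

theorem dotE_separatingLeft : (dotE n).SeparatingLeft :=
  fun _ => dotProduct_eq_zero _

theorem dotE_self_eq_zero {x : Fin n → ℝ} : dotE n x x = 0 ↔ x = 0 := by
  rw [dotE_apply, dotProduct_self_eq_zero]

@[simp] theorem fst_pvec : (pvec n).1 = 1 := rfl

@[simp] theorem fst_snd_pvec : (pvec n).2.1 = 0 := rfl

@[simp] theorem snd_snd_pvec : (pvec n).2.2 = 0 := rfl

@[simp] theorem fst_qvec : (qvec n).1 = 0 := rfl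

@[simp] theorem fst_snd_qvec : (qvec n).2.1 = 0 := rfl

@[simp] theorem snd_snd_qvec : (qvec n).2.2 = 1 := rfl

@[simp] theorem fst_emb (u : Fin n → ℝ) : (emb u).1 = 0 := rfl

@[simp] theorem fst_snd_emb (u : Fin n → ℝ) : (emb u).2.1 = u := rfl

@[simp] theorem snd_snd_emb (u : Fin n → ℝ) : (emb u).2.2 = 0 := rfl

theorem one_notMem_soSet_minkB : (1 : Module.End ℝ (Mink n)) ∉ soSet (minkB n) := fun h1 => by
  simpa [minkB] using h1 (pvec n) (qvec n)

theorem coElem_apply (b a : ℝ) (A : Module.End ℝ (Fin n → ℝ)) (X : Fin n → ℝ) (w : Mink n) :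
    coElem b a A X w = ((b + a) * w.1 + dotE n X w.2.1,
      b • w.2.1 + A w.2.1 - w.2.2 • X, (b - a) * w.2.2) := rfl

theorem coElem_eq_smul_one_add (b a : ℝ) (A : Module.End ℝ (Fin n → ℝ)) (X : Fin n → ℝ) :
    coElem b a A X = b • (1 : Module.End ℝ (Mink n)) + coElem 0 a A X := by
  refine LinearMap.ext fun w => Prod.ext ?_ (Prod.ext ?_ ?_) <;>
    simp only [coElem_apply, LinearMap.add_apply, LinearMap.smul_apply, Module.End.one_apply,
      Prod.fst_add, Prod.snd_add, Prod.smul_fst, Prod.smul_snd, smul_eq_mul]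
  · ring
  · module
  · ring

theorem coElem_zero_mem_soSet (a : ℝ) {A : Module.End ℝ (Fin n → ℝ)} (hA : A ∈ soE n)
    (X : Fin n → ℝ) : coElem 0 a A X ∈ soSet (minkB n) := fun x y => by
  simp only [coElem_apply, minkB, LinearMap.mk₂_apply, map_add, map_sub, map_smul,
    LinearMap.add_apply, LinearMap.sub_apply, LinearMap.smul_apply, smul_eq_mul]
  linear_combination hA x.2.1 y.2.1 - y.2.2 * dotE_isSymm.eq x.2.1 X

theorem coRp_subset_coSet : coRp n ⊆ coSet (minkB n) := by
  rintro _ ⟨b, a, A, hA, X, rfl⟩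
  exact ⟨b, _, coElem_zero_mem_soSet a hA X, coElem_eq_smul_one_add b a A X⟩

/-- The linear version of the embedding `emb` of `ℝⁿ` into Minkowski space. -/
def embₗ (n : ℕ) : (Fin n → ℝ) →ₗ[ℝ] Mink n :=
  LinearMap.inr ℝ ℝ _ ∘ₗ LinearMap.inl ℝ (Fin n → ℝ) ℝ

theorem embₗ_apply (u : Fin n → ℝ) : embₗ n u = emb u := rfl

theorem eq_witt_decomposition (x : Mink n) :
    x = x.1 • pvec n + emb x.2.1 + x.2.2 • qvec n := by
  refine Prod.ext ?_ (Prod.ext ?_ ?_) <;> simp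

/-- The homothety coefficient `b` of `F = (b, 0, A, X)`, read off from `F q = -X + b q`; like
`rotPart` and `shiftPart` it is defined on all endomorphisms so as to be linear in `F`. -/
def scalePart (n : ℕ) : Module.End ℝ (Mink n) →ₗ[ℝ] ℝ :=
  LinearMap.snd ℝ _ ℝ ∘ₗ LinearMap.snd ℝ ℝ _ ∘ₗ LinearMap.applyₗ (qvec n)

/-- The vector `X` of `F = (b, 0, A, X)`, read off from `F q = -X + b q`. -/
def shiftPart (n : ℕ) : Module.End ℝ (Mink n) →ₗ[ℝ] (Fin n → ℝ) :=
  -(LinearMap.fst ℝ _ ℝ ∘ₗ LinearMap.snd ℝ ℝ _ ∘ₗ LinearMap.applyₗ (qvec n))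

/-- The endomorphism `A` of `F = (b, 0, A, X)`, read off from the `ℝⁿ`-component
`A U + b U` of `F U`. -/
def rotPart (n : ℕ) : Module.End ℝ (Mink n) →ₗ[ℝ] Module.End ℝ (Fin n → ℝ) :=
  LinearMap.llcomp ℝ _ _ _ (LinearMap.fst ℝ _ ℝ ∘ₗ LinearMap.snd ℝ ℝ _)
      ∘ₗ LinearMap.lcomp ℝ (Mink n) (embₗ n)
    - (scalePart n).smulRight 1

variable (b : ℝ) (A : Module.End ℝ (Fin n → ℝ)) (X : Fin n → ℝ)

theorem scalePart_coElem : scalePart n (coElem b 0 A X) = b := by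
  simp [scalePart, coElem_apply]

theorem shiftPart_coElem : shiftPart n (coElem b 0 A X) = X := by
  simp [shiftPart, coElem_apply]

theorem rotPart_coElem : rotPart n (coElem b 0 A X) = A := by
  refine LinearMap.ext fun u => ?_
  simp [rotPart, scalePart_coElem, coElem_apply, embₗ_apply]

/-- The algebra of elements `(b, 0, A, X)` of `co(1,n+1)_{ℝp}`, i.e. those whose `so(1,n+1)`-part
annihilates `p`. -/
def coBoostFree (n : ℕ) : Set (Module.End ℝ (Mink n)) :=
  {F | ∃ b : ℝ, ∃ A ∈ soE n, ∃ X : Fin n → ℝ, F = coElem b 0 A X}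

variable {F : Module.End ℝ (Mink n)}

theorem eq_coElem_of_mem_coBoostFree (hF : F ∈ coBoostFree n) :
    F = coElem (scalePart n F) 0 (rotPart n F) (shiftPart n F) := by
  obtain ⟨b, A, -, X, rfl⟩ := hF
  rw [scalePart_coElem, rotPart_coElem, shiftPart_coElem]

theorem rotPart_mem_soE (hF : F ∈ coBoostFree n) : rotPart n F ∈ soE n := by
  obtain ⟨b, A, hA, X, rfl⟩ := hF
  rwa [rotPart_coElem]

theorem mem_soSet_of_scalePart_eq_zero (hF : F ∈ coBoostFree n) (hF0 : scalePart n F = 0) :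
    F ∈ soSet (minkB n) := by
  rw [eq_coElem_of_mem_coBoostFree hF, hF0]
  exact coElem_zero_mem_soSet 0 (rotPart_mem_soE hF) _

theorem apply_of_mem_coBoostFree (hF : F ∈ coBoostFree n) (w : Mink n) :
    F w = (scalePart n F * w.1 + dotE n (shiftPart n F) w.2.1,
      scalePart n F • w.2.1 + rotPart n F w.2.1 - w.2.2 • shiftPart n F,
      scalePart n F * w.2.2) := by
  conv_lhs => rw [eq_coElem_of_mem_coBoostFree hF, coElem_apply, add_zero, sub_zero]

end Coordinates

section Bianchi

variable {n : ℕ} {R : Mink n →ₗ[ℝ] Mink n →ₗ[ℝ] Module.End ℝ (Mink n)}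

theorem IsCurv.bianchi_components (hR : IsCurv (coBoostFree n) R) (x y z : Mink n) :
    (scalePart n (R x y) * z.1 + dotE n (shiftPart n (R x y)) z.2.1
      + (scalePart n (R y z) * x.1 + dotE n (shiftPart n (R y z)) x.2.1)
      + (scalePart n (R z x) * y.1 + dotE n (shiftPart n (R z x)) y.2.1) = 0) ∧
    (scalePart n (R x y) • z.2.1 + rotPart n (R x y) z.2.1 - z.2.2 • shiftPart n (R x y)
      + (scalePart n (R y z) • x.2.1 + rotPart n (R y z) x.2.1 - x.2.2 • shiftPart n (R y z))
      + (scalePart n (R z x) • y.2.1 + rotPart n (R z x) y.2.1 - y.2.2 • shiftPart n (R z x))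
        = 0) ∧
    scalePart n (R x y) * z.2.2 + scalePart n (R y z) * x.2.2
      + scalePart n (R z x) * y.2.2 = 0 := by
  simpa only [apply_of_mem_coBoostFree (hR.2.1 _ _), Prod.mk_add_mk, Prod.mk_eq_zero] using
    hR.2.2 x y z

theorem IsCurv.scalePart_eq_zero_of_snd_snd_eq_zero (hR : IsCurv (coBoostFree n) R) {x y : Mink n}
    (hx : x.2.2 = 0) (hy : y.2.2 = 0) : scalePart n (R x y) = 0 := by
  simpa [hx, hy] using (hR.bianchi_components x y (qvec n)).2.2

theorem IsCurv.rotPart_bianchi_emb (hR : IsCurv (coBoostFree n) R) (u v w : Fin n → ℝ) :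
    rotPart n (R (emb u) (emb v)) w + rotPart n (R (emb v) (emb w)) u
      + rotPart n (R (emb w) (emb u)) v = 0 := by
  have hscale : ∀ a b : Fin n → ℝ, scalePart n (R (emb a) (emb b)) = 0 := fun _ _ =>
    hR.scalePart_eq_zero_of_snd_snd_eq_zero rfl rfl
  simpa [hscale] using (hR.bianchi_components (emb u) (emb v) (emb w)).2.1

theorem IsCurv.rotPart_pvec_emb_eq_zero (hR : IsCurv (coBoostFree n) R) (u : Fin n → ℝ) :
    rotPart n (R (pvec n) (emb u)) = 0 := by
  have hφ : rotPart n ∘ₗ R (pvec n) ∘ₗ embₗ n ∈ firstProlong (soSet (dotE n)) := by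
    refine ⟨fun u => rotPart_mem_soE (hR.2.1 _ _), fun u w => ?_⟩
    have hbianchi := (hR.bianchi_components (pvec n) (emb u) (emb w)).2.1
    rw [hR.1 (emb w) (pvec n),
      hR.scalePart_eq_zero_of_snd_snd_eq_zero (x := pvec n) (y := emb u) rfl rfl] at hbianchi
    have hscale := hR.scalePart_eq_zero_of_snd_snd_eq_zero (x := pvec n) (y := emb w) rfl rfl
    simpa [hscale, embₗ_apply, ← sub_eq_add_neg, sub_eq_zero] using hbianchi
  exact LinearMap.congr_fun
    (eq_zero_of_mem_firstProlong_soSet dotE_separatingLeft dotE_isSymm hφ) u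

theorem IsCurv.dotE_shiftPart_pvec_emb_comm (hR : IsCurv (coBoostFree n) R) (u w : Fin n → ℝ) :
    dotE n (shiftPart n (R (pvec n) (emb u))) w = dotE n (shiftPart n (R (pvec n) (emb w))) u := by
  have hbianchi := (hR.bianchi_components (pvec n) (emb u) (emb w)).1
  rw [hR.1 (emb w) (pvec n),
    hR.scalePart_eq_zero_of_snd_snd_eq_zero (x := emb u) (y := emb w) rfl rfl] at hbianchi
  simpa [← sub_eq_add_neg, sub_eq_zero] using hbianchi

theorem IsCurv.shiftPart_pvec_emb (hR : IsCurv (coBoostFree n) R) (u : Fin n → ℝ) :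
    shiftPart n (R (pvec n) (emb u))
      = scalePart n (R (qvec n) (pvec n)) • u + rotPart n (R (qvec n) (pvec n)) u := by
  have hbianchi := (hR.bianchi_components (pvec n) (emb u) (qvec n)).2.1
  rw [hR.scalePart_eq_zero_of_snd_snd_eq_zero (x := pvec n) (y := emb u) rfl rfl] at hbianchi
  simpa [neg_add_eq_zero] using hbianchi

theorem IsCurv.scalePart_qvec_emb (hR : IsCurv (coBoostFree n) R) (u : Fin n → ℝ) :
    scalePart n (R (qvec n) (emb u)) = dotE n (shiftPart n (R (qvec n) (pvec n))) u := by
  have hbianchi := (hR.bianchi_components (pvec n) (emb u) (qvec n)).1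
  rw [hR.1 (emb u) (qvec n)] at hbianchi
  simpa [neg_add_eq_zero] using hbianchi

theorem IsCurv.scalePart_eq_zero_of_qvec (hR : IsCurv (coBoostFree n) R)
    (hp : scalePart n (R (qvec n) (pvec n)) = 0)
    (hU : ∀ u, scalePart n (R (qvec n) (emb u)) = 0) (x y : Mink n) :
    scalePart n (R x y) = 0 := by
  have hqq : scalePart n (R (qvec n) (qvec n)) = 0 :=
    self_eq_neg.mp <| by rw [← map_neg, ← hR.1]
  have hq : ∀ z, scalePart n (R (qvec n) z) = 0 := fun z => by
    rw [eq_witt_decomposition z]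
    simp only [map_add, map_smul, hp, hU, hqq, smul_zero, add_zero]
  simpa [hR.1 y (qvec n), hq] using (hR.bianchi_components x y (qvec n)).2.2

end Bianchi

section Screw

variable {n : ℕ} {v : Fin n → ℝ}

/-- The elements `(b, 0, A, X)` with `A v = 0` which translate in the direction `v` only
together with a non-trivial rotation `A`, as `𝔤^{4,𝔥,m,ψ}` does for each `v ∈ ℝ^{n-m}`. The
condition is not linear, so this is merely a set. -/
def screwSet (v : Fin n → ℝ) : Set (Module.End ℝ (Mink n)) :=
  {F ∈ coBoostFree n | rotPart n F v = 0 ∧ (rotPart n F = 0 → dotE n (shiftPart n F) v = 0)}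

variable {R : Mink n →ₗ[ℝ] Mink n →ₗ[ℝ] Module.End ℝ (Mink n)}

theorem IsCurv.toCoBoostFree (hR : IsCurv (screwSet v) R) : IsCurv (coBoostFree n) R :=
  hR.mono (Set.sep_subset _ _)

theorem IsCurv.rotPart_apply_eq_zero (hR : IsCurv (screwSet v) R) (x y : Mink n) :
    rotPart n (R x y) v = 0 :=
  (hR.2.1 x y).2.1

theorem IsCurv.dotE_shiftPart_eq_zero (hR : IsCurv (screwSet v) R) {x y : Mink n}
    (hxy : rotPart n (R x y) = 0) : dotE n (shiftPart n (R x y)) v = 0 :=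
  (hR.2.1 x y).2.2 hxy

theorem IsCurv.scalePart_qvec_pvec_eq_zero (hR : IsCurv (screwSet v) R) (hv : v ≠ 0) :
    scalePart n (R (qvec n) (pvec n)) = 0 := by
  have horth := hR.dotE_shiftPart_eq_zero (hR.toCoBoostFree.rotPart_pvec_emb_eq_zero v)
  rw [hR.toCoBoostFree.shiftPart_pvec_emb, hR.rotPart_apply_eq_zero, add_zero, map_smul,
    LinearMap.smul_apply, smul_eq_mul, mul_eq_zero] at horth
  exact horth.resolve_right (mt dotE_self_eq_zero.mp hv)

theorem IsCurv.rotPart_qvec_pvec_eq_zero (hR : IsCurv (screwSet v) R) (hv : v ≠ 0) :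
    rotPart n (R (qvec n) (pvec n)) = 0 := by
  have hshift : ∀ u, shiftPart n (R (pvec n) (emb u)) = rotPart n (R (qvec n) (pvec n)) u :=
    fun u => by
      rw [hR.toCoBoostFree.shiftPart_pvec_emb, hR.scalePart_qvec_pvec_eq_zero hv,
        zero_smul, zero_add]
  refine eq_zero_of_mem_soSet_of_symm dotE_separatingLeft dotE_isSymm
    (rotPart_mem_soE (hR.toCoBoostFree.2.1 _ _)) fun u w => ?_
  rw [← hshift, ← hshift, hR.toCoBoostFree.dotE_shiftPart_pvec_emb_comm]

theorem IsCurv.rotPart_emb_emb_eq_zero (hR : IsCurv (screwSet v) R) (u : Fin n → ℝ) :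
    rotPart n (R (emb u) (emb v)) = 0 := by
  have hφ : rotPart n ∘ₗ R.flip (emb v) ∘ₗ embₗ n ∈ firstProlong (soSet (dotE n)) := by
    refine ⟨fun u => rotPart_mem_soE (hR.toCoBoostFree.2.1 _ _), fun u w => ?_⟩
    have hbianchi := hR.toCoBoostFree.rotPart_bianchi_emb u v w
    rw [hR.rotPart_apply_eq_zero, hR.1 (emb v) (emb w)] at hbianchi
    simpa [embₗ_apply, ← sub_eq_add_neg, sub_eq_zero] using hbianchi
  exact LinearMap.congr_fun
    (eq_zero_of_mem_firstProlong_soSet dotE_separatingLeft dotE_isSymm hφ) u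

theorem IsCurv.scalePart_qvec_emb_eq_zero (hR : IsCurv (screwSet v) R) (hv : v ≠ 0)
    (u : Fin n → ℝ) :
    scalePart n (R (qvec n) (emb u)) = 0 := by
  have hvq : scalePart n (R (emb v) (qvec n)) = 0 := by
    rw [hR.1, map_neg, hR.toCoBoostFree.scalePart_qvec_emb,
      hR.dotE_shiftPart_eq_zero (hR.rotPart_qvec_pvec_eq_zero hv), neg_zero]
  have hshift : dotE n (shiftPart n (R (emb u) (emb v))) v = 0 :=
    hR.dotE_shiftPart_eq_zero (hR.rotPart_emb_emb_eq_zero u)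
  have hrot : dotE n (rotPart n (R (emb v) (qvec n)) u) v = 0 := by
    simpa [hR.rotPart_apply_eq_zero] using
      rotPart_mem_soE (hR.toCoBoostFree.2.1 (emb v) (qvec n)) u v
  have hbianchi := congrArg (dotE n · v)
    (hR.toCoBoostFree.bianchi_components (emb u) (emb v) (qvec n)).2.1
  have hmul : scalePart n (R (qvec n) (emb u)) * dotE n v v = 0 := by
    simpa [hvq, hshift, hrot, hR.rotPart_apply_eq_zero] using hbianchi
  exact (mul_eq_zero.mp hmul).resolve_right (mt dotE_self_eq_zero.mp hv)

theorem IsCurv.mem_soSet_of_screwSet (hR : IsCurv (screwSet v) R) (hv : v ≠ 0) (x y : Mink n) :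
    R x y ∈ soSet (minkB n) :=
  mem_soSet_of_scalePart_eq_zero (hR.toCoBoostFree.2.1 x y) <|
    hR.toCoBoostFree.scalePart_eq_zero_of_qvec (hR.scalePart_qvec_pvec_eq_zero hv)
      (hR.scalePart_qvec_emb_eq_zero hv) x y

variable {g : Set (Module.End ℝ (Mink n))}

theorem curvSpan_subset_soSet_of_subset_screwSet (hv : v ≠ 0) (hg : g ⊆ screwSet v) :
    (curvSpan g : Set (Module.End ℝ (Mink n))) ⊆ soSet (minkB n) :=
  curvSpan_subset_soSet fun _ hR => (hR.mono hg).mem_soSet_of_screwSet hv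

theorem not_isBerger_of_subset_screwSet (hv : v ≠ 0) (hg : g ⊆ screwSet v)
    (hso : ¬ g ⊆ soSet (minkB n)) : ¬ IsBerger g := fun hBerger =>
  hso (hBerger.symm.subset.trans (curvSpan_subset_soSet_of_subset_screwSet hv hg))

end Screw

section TypeFour

variable {n m : ℕ}

theorem dotE_eq_zero_of_mem_Ek_of_mem_EkP {x y : Fin n → ℝ} (hx : x ∈ Ek n m)
    (hy : y ∈ EkP n m) : dotE n x y = 0 := by
  rw [dotE_apply]
  refine Finset.sum_eq_zero fun i _ => ?_
  rcases le_or_gt m (i : ℕ) with hi | hi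
  · rw [hx i hi, zero_mul]
  · rw [hy i hi, mul_zero]

theorem exists_mem_EkP_ne_zero (hm : m < n) : ∃ v ∈ EkP n m, v ≠ 0 := by
  refine ⟨Pi.single ⟨m, hm⟩ 1, fun i hi => Pi.single_eq_of_ne ?_ 1, by simp⟩
  exact fun h => hi.ne (congrArg Fin.val h)

/-- The set `𝔤^{4,𝔥,m,ψ}` of elements `(0, A, X + ψ(A))` of `so(1,n+1)`, for a subset `𝔥` and
a map `ψ` that need not be linear. -/
def typeFour (m : ℕ) (h : Set (Module.End ℝ (Fin n → ℝ)))
    (ψ : Module.End ℝ (Fin n → ℝ) → (Fin n → ℝ)) : Set (Module.End ℝ (Mink n)) :=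
  {F | ∃ A ∈ h, ∃ X ∈ Ek n m, F = coElem 0 0 A (X + ψ A)}

/-- The set `ℝ·id ⊕ 𝔤^{4,𝔥,m,ψ}`. -/
def conformalTypeFour (m : ℕ) (h : Set (Module.End ℝ (Fin n → ℝ)))
    (ψ : Module.End ℝ (Fin n → ℝ) → (Fin n → ℝ)) : Set (Module.End ℝ (Mink n)) :=
  {F | ∃ b : ℝ, ∃ A ∈ h, ∃ X ∈ Ek n m, F = coElem b 0 A (X + ψ A)}

variable {h : Set (Module.End ℝ (Fin n → ℝ))} {ψ : Module.End ℝ (Fin n → ℝ) → (Fin n → ℝ)}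

theorem conformalTypeFour_subset_screwSet (hso : h ⊆ soOn n m) (hψ : ψ 0 = 0) {v : Fin n → ℝ}
    (hv : v ∈ EkP n m) : conformalTypeFour m h ψ ⊆ screwSet v := by
  rintro _ ⟨b, A, hA, X, hX, rfl⟩
  refine ⟨⟨b, A, (hso hA).1, _, rfl⟩, ?_⟩
  rw [rotPart_coElem, shiftPart_coElem]
  refine ⟨(hso hA).2.2 v hv, ?_⟩
  rintro rfl
  rw [hψ, add_zero, dotE_eq_zero_of_mem_Ek_of_mem_EkP hX hv]

theorem one_mem_conformalTypeFour (h0 : 0 ∈ h) (hψ : ψ 0 = 0) :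
    (1 : Module.End ℝ (Mink n)) ∈ conformalTypeFour m h ψ := by
  refine ⟨1, 0, h0, 0, zero_mem _, LinearMap.ext fun w => ?_⟩
  simp [coElem_apply, hψ]

theorem subset_conformalTypeFour {g : Set (Module.End ℝ (Mink n))} (hco : g ⊆ coSet (minkB n))
    (hpr : prSO n g ⊆ typeFour m h ψ) : g ⊆ conformalTypeFour m h ψ := by
  intro F hF
  obtain ⟨b, S, hS, rfl⟩ := hco hF
  obtain ⟨A, hA, X, hX, rfl⟩ := hpr ⟨hS, b, hF⟩
  exact ⟨b, A, hA, X, hX, (coElem_eq_smul_one_add b 0 A _).symm⟩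

theorem type4_not_Berger_general {n m : ℕ} (hm : m < n)
    {h : Set (Module.End ℝ (Fin n → ℝ))} (h0 : 0 ∈ h) (hso : h ⊆ soOn n m)
    {ψ : Module.End ℝ (Fin n → ℝ) → (Fin n → ℝ)} (hψ : ψ 0 = 0) :
    (curvSpan (conformalTypeFour m h ψ) : Set (Module.End ℝ (Mink n))) ⊆ soSet (minkB n) ∧
    ¬ IsBerger (conformalTypeFour m h ψ) ∧
    ∀ g' ⊆ coSet (minkB n), ¬ g' ⊆ soSet (minkB n) → prSO n g' ⊆ typeFour m h ψ →
      ¬ IsBerger g' := by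
  obtain ⟨v, hvm, hv⟩ := exists_mem_EkP_ne_zero hm
  have hscrew := conformalTypeFour_subset_screwSet hso hψ hvm
  refine ⟨curvSpan_subset_soSet_of_subset_screwSet hv hscrew,
    not_isBerger_of_subset_screwSet hv hscrew fun hsub => ?_, fun g' hco hnso hpr => ?_⟩
  · exact one_notMem_soSet_minkB (hsub (one_mem_conformalTypeFour h0 hψ))
  · exact not_isBerger_of_subset_screwSet hv ((subset_conformalTypeFour hco hpr).trans hscrew) hnso

end TypeFour

/-- For `𝔤 = ℝ·id ⊕ 𝔤^{4,𝔥,m,ψ}`, the space `L(ℛ(𝔤))` is contained in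
`so(1,n+1)`; consequently `𝔤` is not a Berger algebra, and no subalgebra
`𝔤' ⊆ co(1,n+1)_{ℝp}` with `𝔤' ⊄ so(1,n+1)` and `pr_{so(1,n+1)}𝔤' = 𝔤^{4,𝔥,m,ψ}`
is a Berger algebra. -/
theorem type4_not_Berger (n m : ℕ) (hm : m < n)
    (h : Set (Module.End ℝ (Fin n → ℝ)))
    (hsub : IsLieSub h) (hso : h ⊆ soOn n m)
    (hz : ∃ Zc : Submodule ℝ (Module.End ℝ (Fin n → ℝ)),
      (Zc : Set (Module.End ℝ (Fin n → ℝ)))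
          = {A | A ∈ h ∧ ∀ B ∈ h, A * B = B * A} ∧
      n - m ≤ Module.finrank ℝ Zc)
    (ψ : Module.End ℝ (Fin n → ℝ) →ₗ[ℝ] (Fin n → ℝ))
    (hψ1 : ∀ A ∈ h, ψ A ∈ EkP n m)
    (hψ2 : ∀ y ∈ EkP n m, ∃ A ∈ h, ψ A = y)
    (hψ3 : ∀ A ∈ h, ∀ B ∈ h, ψ (A * B - B * A) = 0) :
    (curvSpan {F | ∃ b : ℝ, ∃ A ∈ h, ∃ X ∈ Ek n m, F = coElem b 0 A (X + ψ A)}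
        : Set (Module.End ℝ (Mink n))) ⊆ soSet (minkB n) ∧
    ¬ IsBerger {F | ∃ b : ℝ, ∃ A ∈ h, ∃ X ∈ Ek n m, F = coElem b 0 A (X + ψ A)} ∧
    (∀ g' : Set (Module.End ℝ (Mink n)), IsLieSub g' → g' ⊆ coRp n →
      ¬ g' ⊆ soSet (minkB n) →
      prSO n g' = {F | ∃ A ∈ h, ∃ X ∈ Ek n m, F = coElem 0 0 A (X + ψ A)} →
      ¬ IsBerger g') :=
  have ⟨hspan, hBerger, hsub'⟩ := type4_not_Berger_general hm hsub.1 hso (map_zero ψ)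
  ⟨hspan, hBerger, fun g' _ hco hnso hpr =>
    hsub' g' (hco.trans coRp_subset_coSet) hnso hpr.subset⟩

end Weyl
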